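/- arXiv:2412.12958 — 3 statements merged into one kernel-verified Lean document; each statement's English description precedes it below -/
import Mathlib

section
/- If G is a vertex-transitive graph on n vertices, then ϑ(G)·ϑ(Ḡ) = n. -/
open scoped Classical

/-- The Lovász theta function of a graph, as the optimal value of the SDP
max { <J, X> : X ⪰ 0, tr X = 1, X_{ij} = 0 for all edges {i,j} }. -/
noncomputable def lovaszTheta {V : Type} [Fintype V] (G : SimpleGraph V) : ℝ :=
  sSup {t | ∃ X : Matrix V V ℝ, X.PosSemidef ∧ X.trace = 1 ∧
    (∀ i j, G.Adj i j → X i j = 0) ∧ t = ∑ i, ∑ j, X i j}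

/-!
For `t > ϑ(G)`, separating the compact spectraplex from the constraints `X i j = 0` on edges
produces a matrix `W` with diagonal `t` and zeros on non-edges such that `W - J` is positive
semidefinite. Normalized to trace one, `W` is feasible for `Gᶜ` and has value at least `n / t`, so
`n ≤ ϑ(G) ϑ(Gᶜ)` for every graph.

If `G` is vertex-transitive, averaging an optimal matrix for `Gᶜ` over the automorphism group gives
an optimal `Z` with constant diagonal `1 / n` and constant row sums `s / n`, where `s = ϑ(Gᶜ)`.
Since the all-ones vector is an eigenvector, `Z - (s / n²) J` is still positive semidefinite. An `X`
feasible for `G` meets `Z` only on the diagonal, so pairing it with this matrix gives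
`0 ≤ 1 / n - (s / n²) ⟨J, X⟩`, that is, `⟨J, X⟩ s ≤ n`.
-/

section Matrix

open Matrix

variable {n R : Type*}

theorem posSemidef_vecMulVec_self [Finite n] (x : n → ℝ) : (vecMulVec x x).PosSemidef := by
  simpa only [star_trivial] using posSemidef_vecMulVec_self_star x

theorem isClosed_posSemidef [Finite n] : IsClosed {A : Matrix n n ℝ | A.PosSemidef} := by
  cases nonempty_fintype n
  simp only [posSemidef_iff_dotProduct_mulVec, IsHermitian, star_trivial, Set.ofPred_and,
    Set.ofPred_forall]
  exact (isClosed_eq (by fun_prop) (by fun_prop)).inter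
    (isClosed_iInter fun x => isClosed_le (by fun_prop) (by fun_prop))

variable [Fintype n]

theorem one_dotProduct_mulVec_one [NonAssocSemiring R] (A : Matrix n n R) :
    1 ⬝ᵥ A *ᵥ 1 = ∑ i, ∑ j, A i j := by
  simp only [one_dotProduct, mulVec, dotProduct_one]

theorem trace_vecMulVec_mul [CommSemiring R] (x y : n → R) (A : Matrix n n R) :
    (vecMulVec x y * A).trace = y ⬝ᵥ A *ᵥ x := by
  rw [vecMulVec_mul, trace_vecMulVec, dotProduct_comm, dotProduct_mulVec]

theorem exists_trace_mul_eq {m : Type*} [Fintype m] [CommSemiring R]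
    (φ : Matrix m n R →ₗ[R] R) : ∃ N : Matrix n m R, ∀ X, φ X = (N * X).trace := by
  refine ⟨of fun j i => φ (single i j 1), fun X => ?_⟩
  have φ_single (i : m) (j : n) : φ (single i j (X i j)) = φ (single i j 1) * X i j := by
    rw [mul_comm, ← smul_eq_mul, ← map_smul, smul_single, smul_eq_mul, mul_one]
  calc φ X = ∑ i, ∑ j, φ (single i j 1) * X i j := by
        conv_lhs => rw [matrix_eq_sum_single X]
        simp only [map_sum, φ_single]
    _ = ((of fun j i => φ (single i j 1)) * X).trace := Finset.sum_comm

theorem trace_mul_nonneg_of_posSemidef {A B : Matrix n n ℝ} (hA : A.PosSemidef)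
    (hB : B.PosSemidef) : 0 ≤ (A * B).trace := by
  have h : 0 ≤ 1 ⬝ᵥ (A ⊙ Bᵀ) *ᵥ 1 := by
    simpa only [star_trivial] using (hA.hadamard hB.transpose).dotProduct_mulVec_nonneg 1
  rwa [one_dotProduct_mulVec_one, sum_hadamard_eq, transpose_transpose] at h

theorem abs_apply_le_trace_of_posSemidef {A : Matrix n n ℝ} (hA : A.PosSemidef) (i j : n) :
    |A i j| ≤ A.trace := by
  have apply_le_trace (k : n) : A k k ≤ A.trace :=
    Finset.single_le_sum (f := fun k => A k k) (fun _ _ => hA.diag_nonneg) (Finset.mem_univ k)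
  have minor_nonneg : 0 ≤ A i i * A j j - A i j * A i j := by
    have det_nonneg := (hA.submatrix ![i, j]).det_nonneg
    rwa [det_fin_two, submatrix_apply, submatrix_apply, submatrix_apply, submatrix_apply,
      Matrix.cons_val_zero, Matrix.cons_val_one, Matrix.cons_val_fin_one,
      show A j i = A i j from hA.isHermitian.apply i j] at det_nonneg
  refine abs_le_of_sq_le_sq ?_ hA.trace_nonneg
  nlinarith [mul_le_mul (apply_le_trace i) (apply_le_trace j) hA.diag_nonneg hA.trace_nonneg]

theorem posSemidef_sub_smul_vecMulVec_of_mulVec_eq_smul {A : Matrix n n ℝ} (hA : A.PosSemidef)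
    {v : n → ℝ} {c : ℝ} (hv : A *ᵥ v = c • v) :
    (A - (c / (v ⬝ᵥ v)) • vecMulVec v v).PosSemidef := by
  -- The difference is `P * A * P` for `P` the orthogonal projection onto the complement of `v`.
  rcases eq_or_ne v 0 with rfl | hv0
  · simpa using hA
  have hvv : v ⬝ᵥ v ≠ 0 := by simpa using hv0
  let P : Matrix n n ℝ := 1 - (v ⬝ᵥ v)⁻¹ • vecMulVec v v
  have hP : Pᴴ = P := by
    simp [P, conjTranspose_eq_transpose_of_trivial]
  have hPv : P *ᵥ v = 0 := by
    simp [P, sub_mulVec, smul_mulVec, vecMulVec_mulVec, hvv]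
  have hAP : A * P = A - (c / (v ⬝ᵥ v)) • vecMulVec v v := by
    simp only [P, mul_sub, mul_one, Matrix.mul_smul, mul_vecMulVec, hv, smul_vecMulVec, smul_smul,
      div_eq_inv_mul]
  have hPA : P * A = A - (c / (v ⬝ᵥ v)) • vecMulVec v v := by
    have := congrArg conjTranspose hAP
    rwa [conjTranspose_mul, hP, hA.isHermitian.eq, conjTranspose_sub, conjTranspose_smul,
      (posSemidef_vecMulVec_self v).isHermitian.eq, hA.isHermitian.eq, star_trivial] at this
  have hPAP : Pᴴ * A * P = A - (c / (v ⬝ᵥ v)) • vecMulVec v v := by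
    rw [hP, Matrix.mul_assoc, hAP, mul_sub, hPA, Matrix.mul_smul, mul_vecMulVec, hPv,
      zero_vecMulVec, smul_zero, sub_zero]
  exact hPAP ▸ hA.conjTranspose_mul_mul_same P

end Matrix

section LagrangeDuality

variable {E F : Type*} [AddCommGroup E] [Module ℝ E] [TopologicalSpace E]
  [AddCommGroup F] [Module ℝ F] [TopologicalSpace F] [IsTopologicalAddGroup F]
  [ContinuousSMul ℝ F] [LocallyConvexSpace ℝ F] [T1Space F]

theorem exists_lagrange_multiplier_of_isCompact {K : Set E} (hK : IsCompact K)
    (hK_convex : Convex ℝ K) (f : E →L[ℝ] ℝ) (L : E →L[ℝ] F) {t : ℝ} {x₀ : E} (hx₀ : x₀ ∈ K)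
    (hLx₀ : L x₀ = 0) (h : ∀ x ∈ K, L x = 0 → f x < t) :
    ∃ g : F →L[ℝ] ℝ, ∀ x ∈ K, f x + g (L x) < t := by
  have disjoint_image : Disjoint (L.prod f '' K) ({0} ×ˢ Set.Ici t) := by
    rw [Set.disjoint_left]
    rintro _ ⟨x, hx, rfl⟩ ⟨hLx, hfx⟩
    exact (h x hx hLx).not_ge hfx
  obtain ⟨φ, u, v, hφu, huv, hvφ⟩ := geometric_hahn_banach_compact_closed
    (hK_convex.linear_image (L.prod f).toLinearMap) (hK.image (L.prod f).continuous)
    ((convex_singleton (0 : F)).prod (convex_Ici t)) (isClosed_singleton.prod isClosed_Ici)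
    disjoint_image
  set c := φ (0, 1)
  have φ_apply (y : F) (r : ℝ) : φ (y, r) = φ (y, 0) + c * r := by
    have : (y, r) = (y, 0) + r • ((0 : F), (1 : ℝ)) := by simp
    rw [this, map_add, map_smul, smul_eq_mul, mul_comm]
  have separation (x : E) (hx : x ∈ K) : φ (L x, 0) + c * f x < c * t := by
    have hxu := hφu (L x, f x) ⟨x, hx, rfl⟩
    have hvt := hvφ (0, t) ⟨rfl, Set.self_mem_Ici⟩
    rw [φ_apply] at hxu hvt
    rw [Prod.mk_zero_zero, map_zero] at hvt
    linarith
  have c_pos : 0 < c := by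
    have hx₀t := separation x₀ hx₀
    rw [hLx₀, Prod.mk_zero_zero, map_zero, zero_add, ← sub_pos, ← mul_sub] at hx₀t
    exact pos_of_mul_pos_left hx₀t (sub_pos.2 (h x₀ hx₀ hLx₀)).le
  refine ⟨c⁻¹ • φ.comp (.inl ℝ F ℝ), fun x hx => ?_⟩
  calc f x + c⁻¹ * φ (L x, 0) = c⁻¹ * (φ (L x, 0) + c * f x) := by field_simp; ring
    _ < c⁻¹ * (c * t) := by gcongr; exact separation x hx
    _ = t := inv_mul_cancel_left₀ c_pos.ne' t

end LagrangeDuality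

section Spectraplex

open Matrix

variable {n : Type*} [Fintype n]

/-- The spectraplex (the density matrices of quantum information): the positive semidefinite real
matrices of trace one. It is the compact convex set over which `lovaszTheta` is optimized once the
edge constraints are dropped. -/
def spectraplex (n : Type*) [Fintype n] : Set (Matrix n n ℝ) :=
  {A | A.PosSemidef ∧ A.trace = 1}

theorem convex_spectraplex : Convex ℝ (spectraplex n) := by
  intro A hA B hB a b ha hb hab
  refine ⟨(hA.1.smul ha).add (hB.1.smul hb), ?_⟩
  rw [trace_add, trace_smul, trace_smul, hA.2, hB.2, smul_eq_mul, smul_eq_mul, mul_one, mul_one,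
    hab]

theorem isCompact_spectraplex : IsCompact (spectraplex n) := by
  have isCompact_box : IsCompact (Set.univ.pi fun _ : n => Set.univ.pi fun _ : n =>
      Set.Icc (-1 : ℝ) 1) :=
    isCompact_univ_pi fun _ => isCompact_univ_pi fun _ => isCompact_Icc
  refine isCompact_box.of_isClosed_subset ?_ fun A hA i _ j _ => ?_
  · exact isClosed_posSemidef.inter (isClosed_eq (by fun_prop) continuous_const)
  · exact abs_le.1 (hA.2 ▸ abs_apply_le_trace_of_posSemidef hA.1 i j)

theorem inv_smul_vecMulVec_mem_spectraplex {x : n → ℝ} (hx : x ≠ 0) :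
    (x ⬝ᵥ x)⁻¹ • vecMulVec x x ∈ spectraplex n := by
  have hxx : 0 < x ⬝ᵥ x := by simpa using dotProduct_self_star_pos_iff.2 hx
  refine ⟨(posSemidef_vecMulVec_self x).smul (inv_nonneg.2 hxx.le), ?_⟩
  rw [trace_smul, trace_vecMulVec, smul_eq_mul, inv_mul_cancel₀ hxx.ne']

theorem posSemidef_of_forall_mem_spectraplex {A : Matrix n n ℝ} (hA : A.IsHermitian)
    (h : ∀ X ∈ spectraplex n, 0 ≤ (A * X).trace) : A.PosSemidef := by
  refine .of_dotProduct_mulVec_nonneg hA fun x => ?_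
  rcases eq_or_ne x 0 with rfl | hx
  · simp
  have hxx : 0 < x ⬝ᵥ x := by simpa using dotProduct_self_star_pos_iff.2 hx
  have hAx := h _ (inv_smul_vecMulVec_mem_spectraplex hx)
  rw [trace_mul_comm, Matrix.smul_mul, trace_smul, trace_vecMulVec_mul, smul_eq_mul] at hAx
  rw [star_trivial]
  exact nonneg_of_mul_nonneg_right hAx (inv_pos.2 hxx)

end Spectraplex

section EdgeEntries

open Matrix

variable {V : Type*}

/-- The linear map whose kernel cuts `thetaFeasible G` out of the spectraplex. Symmetrizing the
entries makes every functional factoring through it be represented by a symmetric matrix. -/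
noncomputable def symmEdgeEntries (G : SimpleGraph V) : Matrix V V ℝ →L[ℝ] V → V → ℝ where
  toFun X i j := if G.Adj i j then X i j + X j i else 0
  map_add' X Y := by ext i j; dsimp; split_ifs <;> ring
  map_smul' c X := by ext i j; simp [mul_add]
  cont := by
    refine continuous_pi fun i => continuous_pi fun j => ?_
    by_cases h : G.Adj i j <;> simp only [h, if_true, if_false] <;> fun_prop

theorem symmEdgeEntries_transpose (G : SimpleGraph V) (X : Matrix V V ℝ) :
    symmEdgeEntries G Xᵀ = symmEdgeEntries G X := by
  ext i j
  simp [symmEdgeEntries, add_comm]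

theorem symmEdgeEntries_single_of_not_adj {G : SimpleGraph V} {i j : V} (hij : ¬G.Adj i j)
    (a : ℝ) : symmEdgeEntries G (single i j a) = 0 := by
  ext k l
  have hkl (h : G.Adj k l) : ¬(i = k ∧ j = l) ∧ ¬(i = l ∧ j = k) := by
    constructor <;> rintro ⟨rfl, rfl⟩
    exacts [hij h, hij h.symm]
  by_cases h : G.Adj k l
  · simp [symmEdgeEntries, hkl h]
  · simp [symmEdgeEntries, h]

theorem symmEdgeEntries_eq_zero_iff {G : SimpleGraph V} {X : Matrix V V ℝ}
    (hX : X.IsHermitian) : symmEdgeEntries G X = 0 ↔ ∀ i j, G.Adj i j → X i j = 0 := by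
  have hsymm (i j : V) : X j i = X i j := hX.apply i j
  simp [symmEdgeEntries, funext_iff, hsymm]

end EdgeEntries

section Duality

open Matrix

variable {V : Type*} [Fintype V]

/-- The feasible region of the semidefinite program defining `lovaszTheta G`. The objective
`⟨J, X⟩` is written `1 ⬝ᵥ X *ᵥ 1` throughout. -/
def thetaFeasible (G : SimpleGraph V) : Set (Matrix V V ℝ) :=
  {X ∈ spectraplex V | ∀ i j, G.Adj i j → X i j = 0}

theorem isCompact_thetaFeasible (G : SimpleGraph V) : IsCompact (thetaFeasible G) := by
  refine isCompact_spectraplex.inter_right (t := {X | ∀ i j, G.Adj i j → X i j = 0}) ?_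
  simp only [Set.ofPred_forall]
  exact isClosed_iInter fun i => isClosed_iInter fun j => isClosed_iInter fun _ =>
    isClosed_eq (by fun_prop) continuous_const

theorem inv_card_smul_one_mem_thetaFeasible [Nonempty V] (G : SimpleGraph V) :
    (Fintype.card V : ℝ)⁻¹ • (1 : Matrix V V ℝ) ∈ thetaFeasible G := by
  refine ⟨⟨PosSemidef.one.smul (by positivity), ?_⟩, fun i j hij => ?_⟩
  · simp [trace_smul, trace_one]
  · simp [one_apply_ne hij.ne]

theorem exists_isHermitian_multiplier [Nonempty V] {G : SimpleGraph V} {t : ℝ}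
    (h : ∀ X ∈ thetaFeasible G, 1 ⬝ᵥ X *ᵥ 1 < t) :
    ∃ N : Matrix V V ℝ, N.IsHermitian ∧ (∀ i j, ¬G.Adj i j → N i j = 0) ∧
      ∀ X ∈ spectraplex V, 1 ⬝ᵥ X *ᵥ 1 + (N * X).trace < t := by
  let totalSum : Matrix V V ℝ →L[ℝ] ℝ :=
    { toFun := fun X => 1 ⬝ᵥ X *ᵥ 1
      map_add' := fun X Y => by rw [add_mulVec, dotProduct_add]
      map_smul' := fun c X => by rw [smul_mulVec, dotProduct_smul, RingHom.id_apply]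
      cont := by fun_prop }
  have hC := inv_card_smul_one_mem_thetaFeasible G
  obtain ⟨g, hg⟩ := exists_lagrange_multiplier_of_isCompact isCompact_spectraplex
    convex_spectraplex totalSum (symmEdgeEntries G) hC.1
    ((symmEdgeEntries_eq_zero_iff hC.1.1.isHermitian).2 hC.2)
    fun X hX hX0 => h X ⟨hX, (symmEdgeEntries_eq_zero_iff hX.1.isHermitian).1 hX0⟩
  obtain ⟨N, hN⟩ := exists_trace_mul_eq (g.comp (symmEdgeEntries G)).toLinearMap
  have N_apply (i j : V) : N i j = g (symmEdgeEntries G (single j i 1)) := by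
    simpa [trace_mul_single] using (hN (single j i 1)).symm
  refine ⟨N, ?_, fun i j hij => ?_, fun X hX => hN X ▸ hg X hX⟩
  · ext i j
    rw [conjTranspose_apply, star_trivial, N_apply, N_apply, ← symmEdgeEntries_transpose,
      transpose_single]
  · rw [N_apply, symmEdgeEntries_single_of_not_adj (mt SimpleGraph.Adj.symm hij), map_zero]

theorem exists_posSemidef_sub_vecMulVec_one [Nonempty V] {G : SimpleGraph V} {t : ℝ}
    (h : ∀ X ∈ thetaFeasible G, 1 ⬝ᵥ X *ᵥ 1 < t) :
    ∃ W : Matrix V V ℝ, (∀ i, W i i = t) ∧ (∀ i j, Gᶜ.Adj i j → W i j = 0) ∧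
      (W - vecMulVec 1 1).PosSemidef := by
  obtain ⟨N, N_isHermitian, N_apply, hN⟩ := exists_isHermitian_multiplier h
  refine ⟨t • 1 - N, fun i => ?_, fun i j hij => ?_,
    posSemidef_of_forall_mem_spectraplex ?_ fun X hX => ?_⟩
  · simp [N_apply i i G.irrefl]
  · rw [SimpleGraph.compl_adj] at hij
    simp [one_apply_ne hij.1, N_apply i j hij.2]
  · exact ((isHermitian_one.smul (IsSelfAdjoint.all t)).sub N_isHermitian).sub
      (posSemidef_vecMulVec_self 1).isHermitian
  · rw [Matrix.sub_mul, Matrix.sub_mul, trace_sub, trace_sub, trace_vecMulVec_mul, Matrix.smul_mul,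
      Matrix.one_mul, trace_smul, hX.2, smul_eq_mul, mul_one]
    linarith [hN X hX]

end Duality

section LovaszTheta

open Matrix

variable {V : Type} [Fintype V]

theorem lovaszTheta_of_isEmpty [IsEmpty V] (G : SimpleGraph V) : lovaszTheta G = 0 := by
  simp [lovaszTheta, trace_eq_zero_of_isEmpty]

variable [Nonempty V]

theorem isGreatest_lovaszTheta (G : SimpleGraph V) :
    IsGreatest ((fun X => 1 ⬝ᵥ X *ᵥ 1) '' thetaFeasible G) (lovaszTheta G) := by
  have lovaszTheta_eq : lovaszTheta G = sSup ((fun X => 1 ⬝ᵥ X *ᵥ 1) '' thetaFeasible G) := by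
    simp only [lovaszTheta, Set.image, thetaFeasible, spectraplex, one_dotProduct_mulVec_one,
      Set.mem_ofPred_eq, and_assoc, eq_comm]
  rw [lovaszTheta_eq]
  refine ((isCompact_thetaFeasible G).image ?_).isGreatest_sSup (.image _ ?_)
  · fun_prop
  · exact ⟨_, inv_card_smul_one_mem_thetaFeasible G⟩

theorem one_dotProduct_mulVec_one_le_lovaszTheta {G : SimpleGraph V} {X : Matrix V V ℝ}
    (hX : X ∈ thetaFeasible G) : 1 ⬝ᵥ X *ᵥ 1 ≤ lovaszTheta G :=
  (isGreatest_lovaszTheta G).2 ⟨X, hX, rfl⟩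

theorem exists_mem_thetaFeasible_eq_lovaszTheta (G : SimpleGraph V) :
    ∃ X ∈ thetaFeasible G, 1 ⬝ᵥ X *ᵥ 1 = lovaszTheta G :=
  (isGreatest_lovaszTheta G).1

theorem one_le_lovaszTheta (G : SimpleGraph V) : 1 ≤ lovaszTheta G := by
  simpa [smul_mulVec, one_dotProduct_one] using
    one_dotProduct_mulVec_one_le_lovaszTheta (inv_card_smul_one_mem_thetaFeasible G)

theorem card_div_le_lovaszTheta_compl {G : SimpleGraph V} {t : ℝ} (ht : lovaszTheta G < t) :
    Fintype.card V / t ≤ lovaszTheta Gᶜ := by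
  obtain ⟨W, W_diag, W_apply, hW⟩ := exists_posSemidef_sub_vecMulVec_one (G := G) (t := t)
    fun X hX => (one_dotProduct_mulVec_one_le_lovaszTheta hX).trans_lt ht
  have t_pos : 0 < t := by linarith [one_le_lovaszTheta G]
  set n : ℝ := (Fintype.card V : ℝ) with hn
  have n_pos : 0 < n := Nat.cast_pos.2 Fintype.card_pos
  have W_mem : (n * t)⁻¹ • W ∈ thetaFeasible Gᶜ := by
    have W_posSemidef : W.PosSemidef := by
      simpa using hW.add (posSemidef_vecMulVec_self 1)
    have W_trace : W.trace = n * t := by simp [trace, W_diag, hn]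
    refine ⟨⟨W_posSemidef.smul (by positivity), ?_⟩, fun i j hij => ?_⟩
    · rw [trace_smul, W_trace, smul_eq_mul, inv_mul_cancel₀ (by positivity)]
    · rw [Matrix.smul_apply, W_apply i j hij, smul_zero]
  have sq_card_le : n ^ 2 ≤ 1 ⬝ᵥ W *ᵥ 1 := by
    have hW_one := hW.dotProduct_mulVec_nonneg 1
    rw [star_trivial, sub_mulVec, vecMulVec_mulVec, dotProduct_sub, op_smul_eq_smul,
      dotProduct_smul, one_dotProduct_one, ← hn, smul_eq_mul, sub_nonneg, ← sq] at hW_one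
    exact hW_one
  calc n / t = (n * t)⁻¹ * n ^ 2 := by field_simp
    _ ≤ (n * t)⁻¹ * (1 ⬝ᵥ W *ᵥ 1) := by gcongr
    _ = 1 ⬝ᵥ ((n * t)⁻¹ • W) *ᵥ 1 := by rw [smul_mulVec, dotProduct_smul, smul_eq_mul]
    _ ≤ lovaszTheta Gᶜ := one_dotProduct_mulVec_one_le_lovaszTheta W_mem

theorem card_le_lovaszTheta_mul_lovaszTheta_compl (G : SimpleGraph V) :
    (Fintype.card V : ℝ) ≤ lovaszTheta G * lovaszTheta Gᶜ := by
  have compl_pos : 0 < lovaszTheta Gᶜ := zero_lt_one.trans_le (one_le_lovaszTheta Gᶜ)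
  rw [← div_le_iff₀ compl_pos]
  refine le_of_forall_gt_imp_ge_of_dense fun t ht => ?_
  have t_pos : 0 < t := zero_lt_one.trans_le ((one_le_lovaszTheta G).trans ht.le)
  exact (div_le_comm₀ t_pos compl_pos).1 (card_div_le_lovaszTheta_compl ht)

end LovaszTheta

section OrbitAverage

open Matrix
open scoped BigOperators

variable (Γ : Type*) {V : Type*} [Group Γ] [Fintype Γ] [MulAction Γ V]

/-- The average of `Y` over the simultaneous action of a finite group `Γ` on rows and columns; it
turns an optimal solution of the theta program into a `Γ`-invariant one. -/
noncomputable def orbitAverage (Y : Matrix V V ℝ) : Matrix V V ℝ :=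
  𝔼 γ : Γ, Y.submatrix (MulAction.toPerm γ) (MulAction.toPerm γ)

theorem orbitAverage_apply (Y : Matrix V V ℝ) (i j : V) :
    orbitAverage Γ Y i j = 𝔼 γ : Γ, Y (γ • i) (γ • j) :=
  map_expect (Matrix.entryLinearMap ℚ≥0 ℝ i j) _ _

variable {Γ}

theorem orbitAverage_smul_smul (Y : Matrix V V ℝ) (γ : Γ) (i j : V) :
    orbitAverage Γ Y (γ • i) (γ • j) = orbitAverage Γ Y i j := by
  simp only [orbitAverage_apply, smul_smul]
  exact Fintype.expect_equiv (Equiv.mulRight γ) _ _ fun _ => rfl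

theorem orbitAverage_apply_self_eq [MulAction.IsPretransitive Γ V] (Y : Matrix V V ℝ) (i j : V) :
    orbitAverage Γ Y i i = orbitAverage Γ Y j j := by
  obtain ⟨γ, rfl⟩ := MulAction.exists_smul_eq Γ i j
  exact (orbitAverage_smul_smul Y γ i i).symm

theorem posSemidef_orbitAverage {Y : Matrix V V ℝ} (hY : Y.PosSemidef) :
    (orbitAverage Γ Y).PosSemidef :=
  (posSemidef_sum _ fun γ _ => hY.submatrix (MulAction.toPerm γ)).smul (by positivity)

variable [Fintype V]

theorem orbitAverage_mulVec_one_apply_eq [MulAction.IsPretransitive Γ V] (Y : Matrix V V ℝ)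
    (i j : V) : (orbitAverage Γ Y *ᵥ 1) i = (orbitAverage Γ Y *ᵥ 1) j := by
  obtain ⟨γ, rfl⟩ := MulAction.exists_smul_eq Γ i j
  simp only [mulVec, dotProduct_one]
  exact Fintype.sum_equiv (MulAction.toPerm γ) _ _ fun k => (orbitAverage_smul_smul Y γ i k).symm

theorem trace_orbitAverage (Y : Matrix V V ℝ) : (orbitAverage Γ Y).trace = Y.trace := by
  have sum_diag_smul (γ : Γ) : ∑ i, Y (γ • i) (γ • i) = ∑ i, Y i i :=
    Equiv.sum_comp (MulAction.toPerm γ) fun i => Y i i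
  simp only [trace, diag_apply, orbitAverage_apply, ← Finset.expect_sum_comm, sum_diag_smul,
    Fintype.expect_const]

theorem one_dotProduct_orbitAverage_mulVec_one (Y : Matrix V V ℝ) :
    1 ⬝ᵥ orbitAverage Γ Y *ᵥ 1 = 1 ⬝ᵥ Y *ᵥ 1 := by
  have sum_smul (γ : Γ) : ∑ i, ∑ j, Y (γ • i) (γ • j) = ∑ i, ∑ j, Y i j :=
    Fintype.sum_equiv (MulAction.toPerm γ) _ _ fun i =>
      Equiv.sum_comp (MulAction.toPerm γ) (Y (γ • i))
  simp only [one_dotProduct_mulVec_one, orbitAverage_apply, ← Finset.expect_sum_comm, sum_smul,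
    Fintype.expect_const]

theorem orbitAverage_mem_thetaFeasible {H : SimpleGraph V}
    (hΓ : ∀ (γ : Γ) i j, H.Adj i j → H.Adj (γ • i) (γ • j)) {Y : Matrix V V ℝ}
    (hY : Y ∈ thetaFeasible H) : orbitAverage Γ Y ∈ thetaFeasible H := by
  refine ⟨⟨posSemidef_orbitAverage hY.1.1, (trace_orbitAverage Y).trans hY.1.2⟩, fun i j hij => ?_⟩
  rw [orbitAverage_apply]
  exact Finset.expect_eq_zero fun γ _ => hY.2 _ _ (hΓ γ i j hij)

end OrbitAverage

section VertexTransitive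

open Matrix

theorem trace_mul_eq_sum_diag_of_mem_thetaFeasible {V : Type*} [Fintype V] {G : SimpleGraph V}
    {X Z : Matrix V V ℝ} (hX : X ∈ thetaFeasible G) (hZ : Z ∈ thetaFeasible Gᶜ) :
    (X * Z).trace = ∑ i, X i i * Z i i := by
  refine Finset.sum_congr rfl fun i _ => ?_
  refine Finset.sum_eq_single i (fun j _ hji => ?_) (by simp)
  by_cases hij : G.Adj i j
  · exact mul_eq_zero_of_left (hX.2 i j hij) _
  · exact mul_eq_zero_of_right _ (hZ.2 j i ⟨hji, fun h => hij h.symm⟩)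

theorem eq_sum_div_card_of_forall_eq {ι : Type*} [Fintype ι] {f : ι → ℝ} (hf : ∀ i j, f i = f j)
    (i : ι) : f i = (∑ j, f j) / Fintype.card ι := by
  have : Nonempty ι := ⟨i⟩
  simp [fun j => hf j i]

theorem mul_le_card_of_diag_eq_of_mulVec_one_eq {V : Type*} [Fintype V] [Nonempty V]
    {G : SimpleGraph V} {X Z : Matrix V V ℝ} (hX : X ∈ thetaFeasible G)
    (hZ : Z ∈ thetaFeasible Gᶜ) (hdiag : ∀ i j, Z i i = Z j j)
    (hrow : ∀ i j, (Z *ᵥ 1) i = (Z *ᵥ 1) j) :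
    (1 ⬝ᵥ X *ᵥ 1) * (1 ⬝ᵥ Z *ᵥ 1) ≤ Fintype.card V := by
  set n : ℝ := (Fintype.card V : ℝ) with hn
  have n_pos : 0 < n := Nat.cast_pos.2 Fintype.card_pos
  set s := 1 ⬝ᵥ Z *ᵥ 1 with hs
  have Z_diag (i : V) : Z i i = 1 / n := by
    rw [eq_sum_div_card_of_forall_eq hdiag i, ← hZ.1.2]
    rfl
  have Z_mulVec_one : Z *ᵥ 1 = (s / n) • 1 := by
    ext i
    rw [eq_sum_div_card_of_forall_eq hrow i, ← one_dotProduct, ← hs, Pi.smul_apply, Pi.one_apply,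
      smul_eq_mul, mul_one]
  have trace_mul_Z : (X * Z).trace = 1 / n := by
    rw [trace_mul_eq_sum_diag_of_mem_thetaFeasible hX hZ]
    calc ∑ i, X i i * Z i i = X.trace * (1 / n) := by simp only [Z_diag, ← Finset.sum_mul]; rfl
      _ = 1 / n := by rw [hX.1.2, one_mul]
  have trace_nonneg := trace_mul_nonneg_of_posSemidef hX.1.1
    (posSemidef_sub_smul_vecMulVec_of_mulVec_eq_smul hZ.1.1 Z_mulVec_one)
  rw [Matrix.mul_sub, trace_sub, trace_mul_Z, Matrix.mul_smul, trace_smul, trace_mul_comm,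
    trace_vecMulVec_mul, one_dotProduct_one, ← hn, smul_eq_mul, sub_nonneg] at trace_nonneg
  calc (1 ⬝ᵥ X *ᵥ 1) * s = n ^ 2 * (s / n / n * (1 ⬝ᵥ X *ᵥ 1)) := by field_simp
    _ ≤ n ^ 2 * (1 / n) := by gcongr
    _ = n := by field_simp

theorem lovaszTheta_mul_lovaszTheta_compl_le_card {V : Type} [Fintype V] [Nonempty V]
    {G : SimpleGraph V} (Γ : Type*) [Group Γ] [Finite Γ] [MulAction Γ V]
    [MulAction.IsPretransitive Γ V] (hΓ : ∀ (γ : Γ) i j, G.Adj (γ • i) (γ • j) ↔ G.Adj i j) :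
    lovaszTheta G * lovaszTheta Gᶜ ≤ Fintype.card V := by
  cases nonempty_fintype Γ
  obtain ⟨X, hX, hX_eq⟩ := exists_mem_thetaFeasible_eq_lovaszTheta G
  obtain ⟨Y, hY, hY_eq⟩ := exists_mem_thetaFeasible_eq_lovaszTheta Gᶜ
  have hΓ_compl (γ : Γ) (i j : V) (hij : Gᶜ.Adj i j) : Gᶜ.Adj (γ • i) (γ • j) := by
    simpa [SimpleGraph.compl_adj, hΓ] using hij
  rw [← hX_eq, ← hY_eq, ← one_dotProduct_orbitAverage_mulVec_one (Γ := Γ) Y]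
  exact mul_le_card_of_diag_eq_of_mulVec_one_eq hX
    (orbitAverage_mem_thetaFeasible hΓ_compl hY) (orbitAverage_apply_self_eq Y)
    (orbitAverage_mulVec_one_apply_eq Y)

end VertexTransitive

theorem stmt6 {V : Type} [Fintype V] (G : SimpleGraph V)
    (hvt : ∀ u v : V, ∃ e : G ≃g G, e u = v) :
    lovaszTheta G * lovaszTheta Gᶜ = (Fintype.card V : ℝ) := by
  rcases isEmpty_or_nonempty V with hV | hV
  · simp [lovaszTheta_of_isEmpty]
  have : Finite (G ≃g G) := DFunLike.finite _
  have : MulAction.IsPretransitive (G ≃g G) V := ⟨hvt⟩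
  exact le_antisymm
    (lovaszTheta_mul_lovaszTheta_compl_le_card (G ≃g G) fun e i j => e.map_adj_iff)
    (card_le_lovaszTheta_mul_lovaszTheta_compl G)
end

section
/- The matrix X* defined by X*_{ii} = 1/√q, X*_{ij} = 0 for edges {i,j} of the Paley graph P_q, and X*_{ij} = 2/(q+√q) for distinct non-adjacent i,j, is positive semidefinite with eigenvalues 1, 2/(1+√q), and 0. -/
open scoped Classical

/-- The Paley graph on a finite field: vertices are field elements, two vertices
adjacent iff their difference is a nonzero square. -/
def Paley (F : Type) [Field F] : SimpleGraph F :=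
  SimpleGraph.fromRel (fun x y => ∃ z : F, z ≠ 0 ∧ x - y = z ^ 2)

/-- The set of eigenvalues of a real matrix. -/
def matrixSpectrum {V : Type} [Fintype V] (A : Matrix V V ℝ) : Set ℝ :=
  {μ | ∃ v : V → ℝ, v ≠ 0 ∧ A.mulVec v = μ • v}

/-- The matrix X* with diagonal 1/√q, zero on edges of the Paley graph and
2/(q+√q) on non-edges. -/
noncomputable def Xstar (F : Type) [Field F] (q : ℕ) : Matrix F F ℝ :=
  Matrix.of fun i j =>
    if i = j then 1 / Real.sqrt q
    else if (Paley F).Adj i j then 0 else 2 / (q + Real.sqrt q)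

/-! The matrix `T = q ^ (-1/2) (χ (i - j))`, with `χ` the quadratic character of `F`, satisfies
`T ^ 2 = 1 - J / q` and `J T = 0`, where `J` is the all-ones matrix; hence `T ^ 3 = T`. So the
identity splits into the spectral projections of `T` for `0`, `-1` and `1`, namely `J / q`,
`(T ^ 2 - T) / 2` and `(T ^ 2 + T) / 2`. Since `X*` is the first projection plus `2 / (1 + √q)`
times the second, its eigenvalues are the coefficients `1`, `2 / (1 + √q)` and `0`, all
nonnegative. -/

section Idempotents

lemma sum_smul_mul_sum_smul_of_orthogonalIdempotents {S A ι : Type*} [CommSemiring S] [Semiring A]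
    [Algebra S A] [Fintype ι] {e : ι → A} (he : OrthogonalIdempotents e) (a b : ι → S) :
    (∑ i, a i • e i) * ∑ i, b i • e i = ∑ i, (a i * b i) • e i := by
  simp [Finset.sum_mul, Finset.mul_sum, he.mul_eq, smul_smul, mul_comm]

variable {K A ι : Type*} [Field K] [Ring A] [Algebra K A]

theorem spectrum_sum_smul_of_completeOrthogonalIdempotents [Fintype ι] {e : ι → A}
    (he : CompleteOrthogonalIdempotents e) (hne : ∀ i, e i ≠ 0) (c : ι → K) :
    spectrum K (∑ i, c i • e i) = Set.range c := by
  ext μ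
  have hsub : algebraMap K A μ - ∑ i, c i • e i = ∑ i, (μ - c i) • e i := by
    simp [Algebra.algebraMap_eq_smul_one, ← he.complete, Finset.smul_sum, sub_smul]
  rw [spectrum.mem_iff, hsub, ← not_iff_not, not_not, Set.mem_range, not_exists]
  constructor
  · rintro hunit i rfl
    have hzero : (∑ j, (c i - c j) • e j) * e i = 0 := by
      simp [Finset.sum_mul, he.mul_eq]
    exact hne i (hunit.mul_right_eq_zero.mp hzero)
  · intro hμ
    have hμ' (i : ι) : μ - c i ≠ 0 := sub_ne_zero.mpr (Ne.symm (hμ i))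
    refine isUnit_iff_exists.mpr ⟨∑ i, (μ - c i)⁻¹ • e i, ?_, ?_⟩ <;>
      simp [sum_smul_mul_sum_smul_of_orthogonalIdempotents he.toOrthogonalIdempotents, hμ',
        he.complete]

variable (K) in
/-- The spectral projections of an element `t` with `t ^ 3 = t`, for the eigenvalues `0`, `-1` and
`1` in this order. -/
def tripotentProj (t : A) : Fin 3 → A :=
  ![1 - t ^ 2, (2⁻¹ : K) • (t ^ 2 - t), (2⁻¹ : K) • (t ^ 2 + t)]

theorem completeOrthogonalIdempotents_tripotentProj [NeZero (2 : K)] {t : A} (ht : t ^ 3 = t) :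
    CompleteOrthogonalIdempotents (tripotentProj K t) := by
  have h12 : t * t ^ 2 = t := by rw [← pow_succ', ht]
  have h21 : t ^ 2 * t = t := by rw [← pow_succ, ht]
  have h22 : t ^ 2 * t ^ 2 = t ^ 2 := by rw [← pow_add, pow_succ, ht, sq]
  have htwo : (2⁻¹ : K) + 2⁻¹ = 1 := by rw [← two_mul, mul_inv_cancel₀ two_ne_zero]
  refine CompleteOrthogonalIdempotents.iff_ortho_complete.mpr ⟨?_, ?_⟩
  · intro i j hij
    fin_cases i <;> fin_cases j <;> first
      | exact absurd rfl hij
      | simp only [tripotentProj, Fin.zero_eta, Fin.mk_one, Fin.reduceFinMk, Matrix.cons_val,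
          smul_mul_assoc, mul_smul_comm, mul_add, add_mul, mul_sub, sub_mul, one_mul, mul_one,
          ← sq t, h12, h21, h22]
        module
  · calc ∑ i, tripotentProj K t i
        = 1 - t ^ 2 + ((2⁻¹ : K) + 2⁻¹) • t ^ 2 := by
          simp only [Fin.sum_univ_three, tripotentProj, Matrix.cons_val]
          module
      _ = 1 := by rw [htwo, one_smul, sub_add_cancel]

end Idempotents

lemma matrixSpectrum_eq_spectrum {V : Type} [Fintype V] [DecidableEq V] (A : Matrix V V ℝ) :
    matrixSpectrum A = spectrum ℝ A := by
  ext μ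
  rw [← Matrix.spectrum_toLin', ← Module.End.hasEigenvalue_iff_mem_spectrum,
    Module.End.hasEigenvalue_iff, Submodule.ne_bot_iff]
  simp [matrixSpectrum, and_comm]

section MulChar

variable {F R : Type*} [Field F] [Fintype F] [CommRing R]

lemma sum_mulChar_sub_mul_inv_sub_self (χ : MulChar F R) (i : F) :
    ∑ x, χ (i - x) * χ⁻¹ (i - x) = Fintype.card F - 1 := by
  calc ∑ x, χ (i - x) * χ⁻¹ (i - x)
      = ∑ x, (1 : MulChar F R) x := by
        rw [← (Equiv.subLeft i).sum_comp, ← mul_inv_cancel χ]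
        simp only [Equiv.subLeft_apply, sub_sub_cancel, MulChar.mul_apply]
    _ = Fintype.card F - 1 := by
        rw [MulChar.sum_one_eq_card_units, Fintype.card_eq_card_units_add_one (α := F)]
        simp

variable [IsDomain R] {χ : MulChar F R}

lemma sum_mulChar_sub_mul_inv_sub_of_ne (hχ : χ ≠ 1) {i j : F} (hij : i ≠ j) :
    ∑ x, χ (i - x) * χ⁻¹ (j - x) = -1 := by
  have hd : i - j ≠ 0 := sub_ne_zero.mpr hij
  have hχd : χ (i - j) * χ⁻¹ (j - i) = χ (-1) := by
    rw [MulChar.inv_apply', ← map_mul, ← neg_sub i j, inv_neg, mul_neg, mul_inv_cancel₀ hd]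
  have hχneg : χ (-1) * χ (-1) = 1 := by rw [← map_mul, neg_mul_neg, one_mul, map_one]
  -- The substitution `x ↦ i - (i - j) * x` turns the sum into a Jacobi sum.
  calc ∑ x, χ (i - x) * χ⁻¹ (j - x)
      = ∑ x, χ ((i - j) * x) * χ⁻¹ ((j - i) * (1 - x)) := by
        rw [← ((Equiv.mulLeft₀ _ hd).trans (Equiv.subLeft i)).sum_comp]
        refine Finset.sum_congr rfl fun x _ => ?_
        simp only [Equiv.trans_apply, Equiv.mulLeft₀_apply, Equiv.subLeft_apply]
        congr 2 <;> ring
    _ = χ (-1) * jacobiSum χ χ⁻¹ := by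
        simp only [jacobiSum, map_mul, mul_mul_mul_comm _ _ (χ⁻¹ (j - i)), hχd, Finset.mul_sum]
    _ = -1 := by rw [jacobiSum_nontrivial_inv hχ, mul_neg, hχneg]

open Matrix

theorem circulant_mulChar_mul_transpose_circulant_inv [DecidableEq F] (hχ : χ ≠ 1) :
    circulant χ * (circulant (χ⁻¹ : MulChar F R))ᵀ =
      (Fintype.card F : R) • (1 : Matrix F F R) - circulant 1 := by
  ext i j
  obtain rfl | hij := eq_or_ne i j
  · simp [mul_apply, sum_mulChar_sub_mul_inv_sub_self]
  · simp [mul_apply, sum_mulChar_sub_mul_inv_sub_of_ne hχ hij, hij]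

lemma circulant_one_mul_circulant_mulChar (hχ : χ ≠ 1) :
    (circulant 1 : Matrix F F R) * circulant χ = 0 := by
  ext i j
  calc ((circulant 1 : Matrix F F R) * circulant χ) i j = ∑ x, χ (x - j) := by simp [mul_apply]
    _ = ∑ x, χ x := (Equiv.subRight j).sum_comp χ
    _ = 0 := MulChar.sum_eq_zero_of_ne_one hχ

end MulChar

section Paley

open Matrix

lemma paley_adj_iff {F : Type} [Field F] (hneg : IsSquare (-1 : F)) {i j : F} :
    (Paley F).Adj i j ↔ i ≠ j ∧ IsSquare (i - j) := by
  have hsymm : IsSquare (j - i) ↔ IsSquare (i - j) := by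
    constructor <;> intro hd <;> simpa using hneg.mul hd
  have hsq {a b : F} (hab : a ≠ b) : (∃ z, z ≠ 0 ∧ a - b = z ^ 2) ↔ IsSquare (a - b) := by
    rw [isSquare_iff_exists_sq]
    refine exists_congr fun z => and_iff_right_of_imp ?_
    rintro hz rfl
    exact sub_ne_zero.mpr hab (by simpa using hz)
  rw [Paley, SimpleGraph.fromRel_adj]
  refine and_congr_right fun hij => ?_
  rw [hsq hij, hsq hij.symm, hsymm, or_self]

lemma isSymm_Xstar (F : Type) [Field F] (q : ℕ) : (Xstar F q).IsSymm :=
  IsSymm.ext fun i j => by simp only [Xstar, of_apply, eq_comm, SimpleGraph.adj_comm]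

variable (F : Type) [Field F] [Fintype F]

/-- The quadratic character of a finite field with values in `ℝ`. -/
noncomputable def realQuadraticChar : MulChar F ℝ :=
  (quadraticChar F).ringHomComp (Int.castRingHom ℝ)

/-- The Jacobsthal matrix `(χ (i - j))` of the quadratic character, divided by `√q` so that, for
`q ≡ 1 mod 4`, its eigenvalues are `0` and `±1`. -/
noncomputable def normalizedJacobsthal : Matrix F F ℝ :=
  (√(Fintype.card F))⁻¹ • circulant (realQuadraticChar F)

variable {F}

lemma realQuadraticChar_of_ne_zero {a : F} (ha : a ≠ 0) :
    realQuadraticChar F a = if IsSquare a then 1 else -1 := by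
  by_cases h : IsSquare a <;>
    simp [realQuadraticChar, MulChar.ringHomComp_apply, quadraticChar_apply, quadraticCharFun, ha,
      h]

lemma isQuadratic_realQuadraticChar : (realQuadraticChar F).IsQuadratic :=
  (quadraticChar_isQuadratic F).comp _

lemma realQuadraticChar_ne_one (hF : ringChar F ≠ 2) : realQuadraticChar F ≠ 1 :=
  (MulChar.ringHomComp_ne_one_iff Int.cast_injective).mpr (quadraticChar_ne_one hF)

lemma isSymm_circulant_realQuadraticChar (hneg : IsSquare (-1 : F)) :
    (circulant (realQuadraticChar F)).IsSymm := by
  refine circulant_isSymm_iff.mpr fun a => ?_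
  rw [neg_eq_neg_one_mul, map_mul, realQuadraticChar_of_ne_zero (neg_ne_zero.mpr one_ne_zero),
    if_pos hneg, one_mul]

lemma normalizedJacobsthal_apply_self (i : F) : normalizedJacobsthal F i i = 0 := by
  simp [normalizedJacobsthal, MulChar.map_zero]

lemma normalizedJacobsthal_apply_of_ne {i j : F} (hij : i ≠ j) :
    normalizedJacobsthal F i j = (√(Fintype.card F))⁻¹ * if IsSquare (i - j) then 1 else -1 := by
  simp [normalizedJacobsthal, realQuadraticChar_of_ne_zero, sub_ne_zero.mpr hij]

section

variable (hchar : ringChar F ≠ 2) (hneg : IsSquare (-1 : F))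
include hchar hneg

lemma normalizedJacobsthal_sq :
    normalizedJacobsthal F ^ 2 = 1 - (Fintype.card F : ℝ)⁻¹ • circulant 1 := by
  have hcard : (Fintype.card F : ℝ) ≠ 0 := Nat.cast_ne_zero.mpr Fintype.card_ne_zero
  have hmul := circulant_mulChar_mul_transpose_circulant_inv (realQuadraticChar_ne_one hchar)
  rw [isQuadratic_realQuadraticChar.inv, isSymm_circulant_realQuadraticChar hneg] at hmul
  rw [normalizedJacobsthal, sq, smul_mul_smul_comm, hmul, ← mul_inv,
    Real.mul_self_sqrt (Nat.cast_nonneg _), smul_sub, inv_smul_smul₀ hcard]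

lemma normalizedJacobsthal_pow_three : normalizedJacobsthal F ^ 3 = normalizedJacobsthal F := by
  have hone : (circulant 1 : Matrix F F ℝ) * normalizedJacobsthal F = 0 := by
    rw [normalizedJacobsthal, mul_smul_comm,
      circulant_one_mul_circulant_mulChar (realQuadraticChar_ne_one hchar), smul_zero]
  rw [pow_succ, normalizedJacobsthal_sq hchar hneg, sub_mul, one_mul, smul_mul_assoc, hone,
    smul_zero, sub_zero]

lemma tripotentProj_normalizedJacobsthal_ne_zero (k : Fin 3) :
    tripotentProj ℝ (normalizedJacobsthal F) k ≠ 0 := by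
  have hcard : (1 : ℝ) < Fintype.card F := mod_cast Fintype.one_lt_card
  have hinv : (Fintype.card F : ℝ)⁻¹ < 1 := inv_lt_one_of_one_lt₀ hcard
  have hdiag : 0 < tripotentProj ℝ (normalizedJacobsthal F) k 0 0 := by
    fin_cases k <;>
      simp [tripotentProj, normalizedJacobsthal_sq hchar hneg, normalizedJacobsthal_apply_self,
        hinv, Fintype.card_pos]
  exact fun hzero => hdiag.ne' (congr_fun₂ hzero 0 0)

theorem Xstar_card_eq_sum_tripotentProj :
    Xstar F (Fintype.card F) =
      ∑ k, ![1, 2 / (1 + √(Fintype.card F)), 0] k • tripotentProj ℝ (normalizedJacobsthal F) k := by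
  have hpos : 0 < √(Fintype.card F : ℝ) := by simp [Fintype.card_pos]
  have hsq : (Fintype.card F : ℝ) = √(Fintype.card F) ^ 2 := (Real.sq_sqrt (by positivity)).symm
  simp only [Fin.sum_univ_three, tripotentProj, cons_val, normalizedJacobsthal_sq hchar hneg,
    one_smul, zero_smul, add_zero, sub_sub_cancel]
  ext i j
  simp only [Xstar, of_apply, Matrix.add_apply, Matrix.sub_apply, Matrix.smul_apply,
    circulant_apply, Pi.one_apply, smul_eq_mul, mul_one]
  obtain rfl | hij := eq_or_ne i j
  · rw [if_pos rfl, one_apply_eq, normalizedJacobsthal_apply_self]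
    generalize √(Fintype.card F : ℝ) = s at *
    rw [hsq]
    field_simp
    ring
  · rw [if_neg hij, one_apply_ne hij, normalizedJacobsthal_apply_of_ne hij, paley_adj_iff hneg]
    generalize √(Fintype.card F : ℝ) = s at *
    rw [hsq]
    by_cases hS : IsSquare (i - j)
    · rw [if_pos ⟨hij, hS⟩, if_pos hS]
      field_simp
      ring
    · rw [if_neg fun hadj => hS hadj.2, if_neg hS]
      field_simp
      ring

end

end Paley

theorem stmt10 (q : ℕ) (F : Type) [Field F] [Fintype F]
    (hcard : Fintype.card F = q) (hq : q % 4 = 1) :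
    (Xstar F q).PosSemidef ∧
    matrixSpectrum (Xstar F q) = {1, 2 / (1 + Real.sqrt q), 0} := by
  subst hcard
  have hchar : ringChar F ≠ 2 := fun htwo => by
    have := FiniteField.even_card_of_char_two htwo
    omega
  have hneg : IsSquare (-1 : F) := FiniteField.isSquare_neg_one_iff.mpr (by omega)
  have hspec : spectrum ℝ (Xstar F (Fintype.card F)) = {1, 2 / (1 + √(Fintype.card F)), 0} := by
    rw [Xstar_card_eq_sum_tripotentProj hchar hneg,
      spectrum_sum_smul_of_completeOrthogonalIdempotents
        (completeOrthogonalIdempotents_tripotentProj (normalizedJacobsthal_pow_three hchar hneg))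
        (tripotentProj_normalizedJacobsthal_ne_zero hchar hneg)]
    simp only [Matrix.range_cons, Matrix.range_empty, Set.union_empty, Set.singleton_union]
  have hnonneg : 0 ≤ 2 / (1 + √(Fintype.card F : ℝ)) := by positivity
  refine ⟨Matrix.posSemidef_iff_isHermitian_and_spectrum_nonneg.mpr ⟨?_, ?_⟩, ?_⟩
  · exact Matrix.isHermitian_iff_isSymm.mpr (isSymm_Xstar F _)
  · rw [hspec]
    rintro _ (rfl | rfl | rfl)
    exacts [zero_le_one' ℝ, hnonneg, le_refl (0 : ℝ)]
  · rw [matrixSpectrum_eq_spectrum, hspec]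
end

section
/- Let P_q be a Paley graph and k ∈ N₀ with k ≤ ⌊(√q+3)/2⌋. Then z_k(P_q) = ϑ(P_q) = √q, i.e., the k-th level of the exact subgraph hierarchy does not improve upon the Lovász theta function as an upper bound on α(P_q). -/
open scoped Classical

/-- Feasibility for the SDP formulation ϑ₁:
max 1ᵀx s.t. [[X, x],[xᵀ,1]] ⪰ 0, diag(X) = x, X_{ij} = 0 on edges. -/
def Theta1Feasible {V : Type} [Fintype V] (G : SimpleGraph V)
    (x : V → ℝ) (X : Matrix V V ℝ) : Prop :=
  (Matrix.fromBlocks X (Matrix.of fun i (_ : Unit) => x i)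
      (Matrix.of fun (_ : Unit) j => x j) 1).PosSemidef ∧
  (∀ i, X i i = x i) ∧ (∀ i j, G.Adj i j → X i j = 0)

/-- The squared stable set polytope STAB²(H): the convex hull of the outer
products ssᵀ of incidence vectors s of stable sets of H. -/
def stab2 {W : Type} (H : SimpleGraph W) : Set (Matrix W W ℝ) :=
  convexHull ℝ {M | ∃ s : W → ℝ, (∀ i, s i = 0 ∨ s i = 1) ∧
    (∀ i j, H.Adj i j → s i * s j = 0) ∧ M = Matrix.vecMulVec s s}

/-- The optimal value z_J(G) of the ϑ₁ SDP with the exact subgraph constraint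
added for every vertex subset I ∈ J. -/
noncomputable def zJ {V : Type} [Fintype V] (G : SimpleGraph V) (J : Set (Set V)) : ℝ :=
  sSup {t | ∃ (x : V → ℝ) (X : Matrix V V ℝ), Theta1Feasible G x X ∧
    (∀ I ∈ J, X.submatrix (fun a : I => (a : V)) (fun a : I => (a : V)) ∈
      stab2 (G.induce I)) ∧
    t = ∑ i, x i}

/-- The k-th level z_k(G) of the exact subgraph hierarchy: exact subgraph
constraints for all k-element vertex subsets (with the convention
z_k(G) = z_n(G) for k > n). -/
noncomputable def zk {V : Type} [Fintype V] (G : SimpleGraph V) (k : ℕ) : ℝ :=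
  zJ G {I : Set V | I.ncard = min k (Fintype.card V)}

/-!
Let `S` be the Seidel matrix of a conference graph `G` on `n` vertices. Since `S² = n I - J`, the
matrix `√n I + S - J / √n` is a positive multiple of a projection. Pairing a feasible matrix of the
theta program with this matrix for the complement of `G` yields `ϑ(G) ≤ √n`. For `G` itself it is a
multiple of `X - x xᵀ`, where `x` is constant `1 / √n` and `X` has the entries `1 / √n` on the
diagonal, `0` on edges and `2 / (√n (√n + 1))` on non-edges; so `(x, X)` is feasible, with value
`√n`. A principal submatrix of `X` of order at most `(√n + 3) / 2` is diagonally dominant, hence a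
combination of the outer products of stable sets of size one and two with nonnegative coefficients
of sum at most one, and no exact subgraph constraint of that order cuts off `X`. Paley graphs are
conference graphs because the Jacobi sum of the quadratic character with its inverse is `-χ(-1)`.
-/

open Matrix Finset

section PosSemidef

variable {V : Type*} [Fintype V]

theorem sum_sum_nonneg_of_posSemidef {R : Type*} [Ring R] [PartialOrder R] [StarRing R]
    {X : Matrix V V R} (hX : X.PosSemidef) : 0 ≤ ∑ i, ∑ j, X i j := by
  simpa [dotProduct, mulVec] using hX.dotProduct_mulVec_nonneg 1

open scoped ComplexOrder in
theorem posSemidef_of_mul_self_eq_smul {𝕜 : Type*} [RCLike 𝕜] {B : Matrix V V 𝕜} {c : ℝ}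
    (hc : 0 < c) (hB : B.IsHermitian) (hBB : B * B = c • B) : B.PosSemidef := by
  have h : B = c⁻¹ • (Bᴴ * B) := by rw [hB.eq, hBB, inv_smul_smul₀ hc.ne']
  rw [h]
  exact (posSemidef_conjTranspose_mul_self B).smul (inv_nonneg.2 hc.le)

theorem sum_sum_mul_nonneg_of_posSemidef {X Y : Matrix V V ℝ} (hX : X.PosSemidef)
    (hY : Y.PosSemidef) : 0 ≤ ∑ i, ∑ j, X i j * Y i j :=
  sum_sum_nonneg_of_posSemidef (hX.hadamard hY)

theorem sum_sum_le_card_mul_trace {X : Matrix V V ℝ} (hX : X.PosSemidef) :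
    ∑ i, ∑ j, X i j ≤ Fintype.card V * X.trace := by
  have h := sum_sum_mul_nonneg_of_posSemidef (SimpleGraph.posSemidef_lapMatrix ℝ ⊤) hX
  have hlap (i j : V) : (⊤ : SimpleGraph V).lapMatrix ℝ i j * X i j =
      (if i = j then Fintype.card V * X i i else 0) - X i j := by
    have := Fintype.card_pos_iff.2 ⟨i⟩
    rcases eq_or_ne i j with rfl | hij
    · simp [SimpleGraph.lapMatrix, SimpleGraph.degMatrix, Nat.cast_sub this, sub_mul]
    · simp [SimpleGraph.lapMatrix, SimpleGraph.degMatrix, hij]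
  simp only [hlap, sum_sub_distrib, sum_ite_eq, mem_univ, if_true, ← mul_sum] at h
  exact sub_nonneg.1 h

end PosSemidef

section Theta

variable {V : Type} [Fintype V] {G : SimpleGraph V} {x : V → ℝ} {X : Matrix V V ℝ}

theorem bddAbove_lovaszTheta (G : SimpleGraph V) :
    BddAbove {t | ∃ X : Matrix V V ℝ, X.PosSemidef ∧ X.trace = 1 ∧
      (∀ i j, G.Adj i j → X i j = 0) ∧ t = ∑ i, ∑ j, X i j} := by
  refine ⟨Fintype.card V, ?_⟩
  rintro _ ⟨X, hX, htr, -, rfl⟩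
  simpa [htr] using sum_sum_le_card_mul_trace hX

theorem lovaszTheta_nonneg (G : SimpleGraph V) : 0 ≤ lovaszTheta G := by
  refine Real.sSup_nonneg ?_
  rintro _ ⟨X, hX, -, -, rfl⟩
  exact sum_sum_nonneg_of_posSemidef hX

theorem sum_sum_le_lovaszTheta_mul_trace (hX : X.PosSemidef)
    (hadj : ∀ i j, G.Adj i j → X i j = 0) : ∑ i, ∑ j, X i j ≤ lovaszTheta G * X.trace := by
  rcases hX.trace_nonneg.eq_or_lt with htr | htr
  · simp [hX.trace_eq_zero_iff.1 htr.symm]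
  · rw [← div_le_iff₀ htr]
    refine le_csSup (bddAbove_lovaszTheta G)
      ⟨X.trace⁻¹ • X, hX.smul (inv_nonneg.2 htr.le), ?_, ?_, ?_⟩
    · simp [trace_smul, htr.ne']
    · intro i j hij
      simp [hadj i j hij]
    · simp [← Finset.mul_sum, div_eq_inv_mul]

theorem theta1Feasible_iff :
    Theta1Feasible G x X ↔ (X - vecMulVec x x).PosSemidef ∧
      (∀ i, X i i = x i) ∧ (∀ i j, G.Adj i j → X i j = 0) := by
  let _ : Invertible (1 : Matrix Unit Unit ℝ) := invertibleOne
  have hSchur := PosDef.fromBlocks₂₂ X (of fun i (_ : Unit) => x i) (D := (1 : Matrix Unit Unit ℝ))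
    PosDef.one
  have hx : (of fun i (_ : Unit) => x i) * (of fun i (_ : Unit) => x i)ᴴ = vecMulVec x x := by
    ext i j
    simp [mul_apply, vecMulVec_apply]
  rw [inv_one, Matrix.mul_one, hx] at hSchur
  rw [← hSchur]
  exact Iff.rfl

theorem Theta1Feasible.sq_sum_le_sum_sum (h : Theta1Feasible G x X) :
    (∑ i, x i) ^ 2 ≤ ∑ i, ∑ j, X i j := by
  have := sum_sum_nonneg_of_posSemidef (theta1Feasible_iff.1 h).1
  simp only [Matrix.sub_apply, vecMulVec_apply, sum_sub_distrib, ← sum_mul_sum] at this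
  linarith [sq (∑ i, x i)]

theorem Theta1Feasible.sum_le_lovaszTheta (h : Theta1Feasible G x X) :
    ∑ i, x i ≤ lovaszTheta G := by
  have ⟨hX, hdiag, hadj⟩ := h
  have htr : X.trace = ∑ i, x i := sum_congr rfl fun i _ => hdiag i
  have hle : (∑ i, x i) ^ 2 ≤ lovaszTheta G * ∑ i, x i :=
    htr ▸ h.sq_sum_le_sum_sum.trans (sum_sum_le_lovaszTheta_mul_trace (hX.submatrix Sum.inl) hadj)
  nlinarith [lovaszTheta_nonneg G]

theorem le_zJ {J : Set (Set V)} (h : Theta1Feasible G x X)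
    (hJ : ∀ I ∈ J, X.submatrix (fun a : I => (a : V)) (fun a : I => (a : V)) ∈
      stab2 (G.induce I)) : ∑ i, x i ≤ zJ G J := by
  refine le_csSup ⟨lovaszTheta G, ?_⟩ ⟨x, X, h, hJ, rfl⟩
  rintro _ ⟨y, Y, hY, -, rfl⟩
  exact hY.sum_le_lovaszTheta

theorem zJ_le_lovaszTheta (G : SimpleGraph V) (J : Set (Set V)) : zJ G J ≤ lovaszTheta G := by
  refine Real.sSup_le ?_ (lovaszTheta_nonneg G)
  rintro _ ⟨x, X, h, -, rfl⟩
  exact h.sum_le_lovaszTheta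

end Theta

section Stab2

theorem sum_smul_mem_of_sum_le_one {ι E : Type*} [Fintype ι] [AddCommGroup E] [Module ℝ E]
    {s : Set E} (hs : Convex ℝ s) (hzero : 0 ∈ s) {w : ι → ℝ} {z : ι → E}
    (hw : ∀ i, 0 ≤ w i) (hw1 : ∑ i, w i ≤ 1) (hz : ∀ i, w i ≠ 0 → z i ∈ s) :
    ∑ i, w i • z i ∈ s := by
  have := hs.finsum_mem (w := fun o : Option ι => o.elim (1 - ∑ i, w i) w)
    (z := fun o => o.elim 0 z) ?_ ?_ ?_
  · simpa [finsum_eq_sum_of_fintype] using this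
  · rintro (_ | i)
    · exact sub_nonneg.2 hw1
    · exact hw i
  · simp [finsum_eq_sum_of_fintype]
  · rintro (_ | i)
    · exact fun _ => hzero
    · exact hz i

theorem sum_sum_smul_vecMulVec_single_add_single {W : Type*} [Fintype W] [DecidableEq W]
    {N : Matrix W W ℝ} (hN : N.IsSymm) :
    ∑ i, ∑ j, (N i j / 2) • vecMulVec (Pi.single i 1 + Pi.single j 1 : W → ℝ)
      (Pi.single i 1 + Pi.single j 1) = diagonal (fun i => ∑ j, N i j) + N := by
  have hsymm (i j : W) : N i j = N j i := hN.apply j i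
  ext u v
  simp only [add_vecMulVec, vecMulVec_add, ← single_eq_single_vecMulVec_single, smul_add,
    sum_add_distrib, smul_single, smul_eq_mul, mul_one, Matrix.add_apply, Matrix.sum_apply,
    Matrix.single_apply, diagonal_apply, ite_and, sum_ite_irrel, sum_ite_eq', sum_const_zero,
    mem_univ, if_true]
  rcases eq_or_ne u v with rfl | huv
  · simp only [if_true, hsymm _ u, ← sum_div]
    ring
  · simp only [if_neg huv, hsymm v u]
    ring

variable {W : Type} {H : SimpleGraph W}

theorem vecMulVec_indicator_mem_stab2 {S : Set W} (hS : H.IsIndepSet S) :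
    vecMulVec (S.indicator (1 : W → ℝ)) (S.indicator 1) ∈ stab2 H := by
  refine subset_convexHull ℝ _ ⟨_, fun i => ?_, fun i j hij => ?_, rfl⟩
  · by_cases h : i ∈ S <;> simp [h]
  · by_contra hne
    obtain ⟨hi, hj⟩ := mul_ne_zero_iff.1 hne
    exact hS (Set.mem_of_indicator_ne_zero hi) (Set.mem_of_indicator_ne_zero hj) hij.ne hij

theorem zero_mem_stab2 : (0 : Matrix W W ℝ) ∈ stab2 H := by
  have h := vecMulVec_indicator_mem_stab2 (H := H) (S := ∅) (Set.pairwise_empty _)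
  rwa [Set.indicator_empty', zero_vecMulVec] at h

variable [DecidableEq W]

theorem vecMulVec_single_mem_stab2 (i : W) :
    vecMulVec (Pi.single i 1 : W → ℝ) (Pi.single i 1) ∈ stab2 H := by
  have hi : (Pi.single i 1 : W → ℝ) = ({i} : Set W).indicator 1 := by
    ext u
    simp [Pi.single_apply, Set.indicator_apply]
  rw [hi]
  exact vecMulVec_indicator_mem_stab2 (Set.pairwise_singleton i _)

theorem vecMulVec_single_add_single_mem_stab2 {i j : W} (hij : i ≠ j) (h : ¬ H.Adj i j) :
    vecMulVec (Pi.single i 1 + Pi.single j 1 : W → ℝ) (Pi.single i 1 + Pi.single j 1) ∈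
      stab2 H := by
  have hS : H.IsIndepSet {i, j} := by
    simp [SimpleGraph.isIndepSet_iff, Set.pairwise_pair, h, H.adj_comm j i]
  have hpair : (Pi.single i 1 + Pi.single j 1 : W → ℝ) = ({i, j} : Set W).indicator 1 := by
    ext u
    rcases eq_or_ne u i with rfl | hu
    · simp [hij]
    · simp [Pi.single_apply, Set.indicator_apply, hu]
  rw [hpair]
  exact vecMulVec_indicator_mem_stab2 hS

theorem diagonal_add_eq_sum_smul_vecMulVec [Fintype W] {N : Matrix W W ℝ} (hN : N.IsSymm)
    (y : W → ℝ) :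
    diagonal y + N = ∑ i, (y i - ∑ j, N i j) • vecMulVec (Pi.single i 1) (Pi.single i 1) +
      ∑ p : W × W, (N p.1 p.2 / 2) • vecMulVec (Pi.single p.1 1 + Pi.single p.2 1 : W → ℝ)
        (Pi.single p.1 1 + Pi.single p.2 1) := by
  simp only [Fintype.sum_prod_type, sum_sum_smul_vecMulVec_single_add_single hN,
    ← single_eq_single_vecMulVec_single, smul_single, smul_eq_mul, mul_one,
    sum_single_eq_diagonal, ← add_assoc, diagonal_add, sub_add_cancel]

theorem diagonal_add_mem_stab2 [Fintype W] {y : W → ℝ} {N : Matrix W W ℝ}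
    (hsymm : N.IsSymm) (hnonneg : ∀ i j, 0 ≤ N i j) (hdiag : ∀ i, N i i = 0)
    (hadj : ∀ i j, H.Adj i j → N i j = 0) (hrow : ∀ i, ∑ j, N i j ≤ y i) (hsum : ∑ i, y i ≤ 1) :
    diagonal y + N ∈ stab2 H := by
  have hdecomp : diagonal y + N = ∑ o : W ⊕ W × W,
      Sum.elim (fun i => y i - ∑ j, N i j) (fun p => N p.1 p.2 / 2) o •
      Sum.elim (fun i => vecMulVec (Pi.single i 1 : W → ℝ) (Pi.single i 1))
        (fun p => vecMulVec (Pi.single p.1 1 + Pi.single p.2 1)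
          (Pi.single p.1 1 + Pi.single p.2 1)) o := by
    rw [Fintype.sum_sum_type]
    exact diagonal_add_eq_sum_smul_vecMulVec hsymm y
  rw [hdecomp]
  refine sum_smul_mem_of_sum_le_one (convex_convexHull ℝ _) zero_mem_stab2 ?_ ?_ ?_
  · rintro (i | ⟨i, j⟩)
    · exact sub_nonneg.2 (hrow i)
    · exact div_nonneg (hnonneg i j) zero_le_two
  · have hN : 0 ≤ ∑ i, ∑ j, N i j := sum_nonneg fun i _ => sum_nonneg fun j _ => hnonneg i j
    simp only [Fintype.sum_sum_type, Fintype.sum_prod_type, Sum.elim_inl, Sum.elim_inr,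
      sum_sub_distrib, ← sum_div]
    linarith
  · rintro (i | ⟨i, j⟩) hne
    · exact vecMulVec_single_mem_stab2 i
    · have hNij : N i j ≠ 0 := fun h => hne (div_eq_zero_iff.2 (.inl h))
      have hij : i ≠ j := fun h => hNij (h ▸ hdiag i)
      exact vecMulVec_single_add_single_mem_stab2 hij fun h => hNij (hadj i j h)

theorem smul_one_add_smul_adjMatrix_compl_mem_stab2 [Fintype W] {a b : ℝ} (hb : 0 ≤ b)
    (hrow : b * (Fintype.card W - 1) ≤ a) (hsum : a * Fintype.card W ≤ 1) :
    a • (1 : Matrix W W ℝ) + b • Hᶜ.adjMatrix ℝ ∈ stab2 H := by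
  rw [smul_one_eq_diagonal]
  refine diagonal_add_mem_stab2 ((Hᶜ.isSymm_adjMatrix).smul b) ?_ ?_ ?_ ?_ ?_
  · intro i j
    exact mul_nonneg hb (by rw [SimpleGraph.adjMatrix_apply]; split_ifs <;> simp)
  · simp
  · intro i j hij
    simp [hij]
  · intro i
    refine le_trans ?_ hrow
    have hdeg : (Hᶜ.degree i : ℝ) ≤ Fintype.card W - 1 := by
      rw [le_sub_iff_add_le]
      exact_mod_cast Hᶜ.degree_lt_card_verts i
    calc ∑ j, (b • Hᶜ.adjMatrix ℝ) i j = b * Hᶜ.degree i := by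
          simp only [Matrix.smul_apply, smul_eq_mul, ← mul_sum, Hᶜ.degree_eq_sum_if_adj i,
            SimpleGraph.adjMatrix_apply]
      _ ≤ b * (Fintype.card W - 1) := mul_le_mul_of_nonneg_left hdeg hb
  · simpa [mul_comm] using hsum

end Stab2

section ConferenceGraph

variable {V : Type*}

/-- The Seidel matrix of `G`, with entries `-1` on edges, `1` on non-edges and `0` on the
diagonal. -/
noncomputable def seidelMatrix (G : SimpleGraph V) : Matrix V V ℝ :=
  Gᶜ.adjMatrix ℝ - G.adjMatrix ℝ

variable {G : SimpleGraph V} {i j : V}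

@[simp]
theorem seidelMatrix_apply_self (G : SimpleGraph V) (i : V) : seidelMatrix G i i = 0 := by
  simp [seidelMatrix]

theorem seidelMatrix_apply_of_adj (h : G.Adj i j) : seidelMatrix G i j = -1 := by
  simp [seidelMatrix, h]

theorem seidelMatrix_apply_of_not_adj (hij : i ≠ j) (h : ¬ G.Adj i j) :
    seidelMatrix G i j = 1 := by
  simp [seidelMatrix, hij, h]

theorem seidelMatrix_apply_le_one (G : SimpleGraph V) (i j : V) : seidelMatrix G i j ≤ 1 := by
  rw [seidelMatrix, Matrix.sub_apply, SimpleGraph.adjMatrix_apply, SimpleGraph.adjMatrix_apply]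
  split_ifs <;> norm_num

theorem isSymm_seidelMatrix (G : SimpleGraph V) : (seidelMatrix G).IsSymm :=
  Gᶜ.isSymm_adjMatrix.sub G.isSymm_adjMatrix

theorem seidelMatrix_compl (G : SimpleGraph V) : seidelMatrix Gᶜ = -seidelMatrix G := by
  ext i j
  simp [seidelMatrix, SimpleGraph.adjMatrix_apply]

theorem adjMatrix_compl_eq_seidelMatrix (G : SimpleGraph V) :
    Gᶜ.adjMatrix ℝ = (2⁻¹ : ℝ) • (vecMulVec 1 1 - 1 + seidelMatrix G) := by
  ext i j
  rcases eq_or_ne i j with rfl | hij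
  · simp
  · by_cases h : G.Adj i j
    · simp [seidelMatrix_apply_of_adj h, hij, h]
    · norm_num [seidelMatrix_apply_of_not_adj hij h, hij, h]

variable [Fintype V]

/-- A conference graph, characterised by the equation `S² = n I - J` for its Seidel matrix `S`.
For `n > 1` this is the class of strongly regular graphs with parameters
`(n, (n - 1) / 2, (n - 5) / 4, (n - 1) / 4)`. -/
def IsConferenceGraph (G : SimpleGraph V) : Prop :=
  seidelMatrix G * seidelMatrix G = (Fintype.card V : ℝ) • 1 - vecMulVec 1 1

/-- The matrix `√n I + S - J / √n`. For a conference graph with Seidel matrix `S` it is `2√n`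
times the orthogonal projection onto the eigenspace of `S` for the eigenvalue `√n`. -/
noncomputable def scaledSeidelProjection (G : SimpleGraph V) : Matrix V V ℝ :=
  √(Fintype.card V) • 1 + seidelMatrix G - (√(Fintype.card V))⁻¹ • vecMulVec 1 1

namespace IsConferenceGraph

theorem compl (hG : IsConferenceGraph G) : IsConferenceGraph Gᶜ := by
  rwa [IsConferenceGraph, seidelMatrix_compl, neg_mul_neg]

theorem seidelMatrix_mulVec_one (hG : IsConferenceGraph G) : seidelMatrix G *ᵥ 1 = 0 := by
  rw [← dotProduct_self_eq_zero, dotProduct_mulVec, vecMul_mulVec, (isSymm_seidelMatrix G).eq, hG]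
  simp only [vecMul_sub, vecMul_smul, vecMul_one, vecMul_vecMulVec, sub_dotProduct,
    smul_dotProduct, smul_eq_mul, one_dotProduct_one]
  exact sub_self _

theorem sum_seidelMatrix (hG : IsConferenceGraph G) (i : V) : ∑ j, seidelMatrix G i j = 0 := by
  simpa [mulVec, dotProduct] using congrFun hG.seidelMatrix_mulVec_one i

theorem exists_adj [Nontrivial V] (hG : IsConferenceGraph G) (i : V) : ∃ j, G.Adj i j := by
  by_contra! h
  obtain ⟨k, hk⟩ := exists_ne i
  refine (hG.sum_seidelMatrix i).not_gt (sum_pos' (fun j _ => ?_) ⟨k, mem_univ k, ?_⟩)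
  · rcases eq_or_ne i j with rfl | hij
    · simp
    · simp [seidelMatrix_apply_of_not_adj hij (h j)]
  · simp [seidelMatrix_apply_of_not_adj hk.symm (h k)]

theorem five_le_card [Nontrivial V] (hG : IsConferenceGraph G) : 5 ≤ Fintype.card V := by
  obtain ⟨i, -⟩ := exists_pair_ne V
  obtain ⟨j, hij⟩ := hG.exists_adj i
  have hmul : ∑ l, seidelMatrix G i l * seidelMatrix G j l = -1 := by
    simpa [mul_apply, (isSymm_seidelMatrix G).apply _ j, hij.ne] using congrFun₂ hG i j
  -- The terms of this sum are nonnegative, and those for `l = i` and `l = j` equal `2`.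
  have hsum : ∑ l, (1 - seidelMatrix G i l) * (1 - seidelMatrix G j l) = Fintype.card V - 1 := by
    simp only [sub_mul, mul_sub, one_mul, mul_one, sum_sub_distrib, hG.sum_seidelMatrix, hmul]
    simp
  have hle : ∑ l ∈ {i, j}, (1 - seidelMatrix G i l) * (1 - seidelMatrix G j l) ≤
      Fintype.card V - 1 := by
    rw [← hsum]
    exact sum_le_univ_sum_of_nonneg fun l => mul_nonneg
      (sub_nonneg.2 (seidelMatrix_apply_le_one G i l))
      (sub_nonneg.2 (seidelMatrix_apply_le_one G j l))
  rw [sum_pair hij.ne] at hle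
  simp only [seidelMatrix_apply_self, seidelMatrix_apply_of_adj hij,
    seidelMatrix_apply_of_adj hij.symm] at hle
  exact_mod_cast (by linarith : (5 : ℝ) ≤ Fintype.card V)

theorem posSemidef_scaledSeidelProjection [Nonempty V] (hG : IsConferenceGraph G) :
    (scaledSeidelProjection G).PosSemidef := by
  have hs : 0 < √(Fintype.card V : ℝ) := Real.sqrt_pos.2 (Nat.cast_pos.2 Fintype.card_pos)
  have hcard : (Fintype.card V : ℝ) = √(Fintype.card V) * √(Fintype.card V) :=
    (Real.mul_self_sqrt (Nat.cast_nonneg _)).symm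
  have hSS : seidelMatrix G * seidelMatrix G = (Fintype.card V : ℝ) • 1 - vecMulVec 1 1 := hG
  have hSJ : seidelMatrix G * vecMulVec 1 1 = 0 := by
    rw [mul_vecMulVec, hG.seidelMatrix_mulVec_one, zero_vecMulVec]
  have hJS : vecMulVec 1 1 * seidelMatrix G = 0 := by
    rw [vecMulVec_mul, ← mulVec_transpose, (isSymm_seidelMatrix G).eq, hG.seidelMatrix_mulVec_one,
      vecMulVec_zero]
  have hJJ : vecMulVec 1 1 * vecMulVec 1 1 =
      (Fintype.card V : ℝ) • vecMulVec (1 : V → ℝ) (1 : V → ℝ) := by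
    rw [vecMulVec_mul_vecMulVec, vecMulVec_smul, one_dotProduct]
    simp
  refine posSemidef_of_mul_self_eq_smul (mul_pos two_pos hs) ?_ ?_
  · rw [isHermitian_iff_isSymm]
    exact ((isSymm_one.smul _).add (isSymm_seidelMatrix G)).sub
      (IsSymm.smul (transpose_vecMulVec _ _) _)
  · simp only [scaledSeidelProjection, add_mul, mul_add, sub_mul, mul_sub, smul_mul_assoc,
      mul_smul_comm, hSS, hSJ, hJS, hJJ, one_mul, mul_one, smul_zero]
    generalize √(Fintype.card V : ℝ) = s at *
    simp only [hcard]
    match_scalars <;> field_simp <;> ring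

end IsConferenceGraph

/-- The matrix with entries `1 / √n` on the diagonal, `0` on edges and `2 / (√n (√n + 1))` on
non-edges, which for a conference graph is an optimal solution of the `ϑ₁` program. -/
noncomputable def thetaSolution (G : SimpleGraph V) : Matrix V V ℝ :=
  (√(Fintype.card V))⁻¹ • 1 +
    (2 / (√(Fintype.card V) * (√(Fintype.card V) + 1))) • Gᶜ.adjMatrix ℝ

theorem thetaSolution_sub_vecMulVec [Nonempty V] (G : SimpleGraph V) :
    thetaSolution G - vecMulVec ((√(Fintype.card V))⁻¹ • 1) ((√(Fintype.card V))⁻¹ • 1) =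
      (√(Fintype.card V) * (√(Fintype.card V) + 1))⁻¹ • scaledSeidelProjection G := by
  rw [thetaSolution, scaledSeidelProjection, adjMatrix_compl_eq_seidelMatrix, smul_vecMulVec,
    vecMulVec_smul]
  match_scalars <;> field_simp <;> ring

theorem thetaSolution_submatrix (G : SimpleGraph V) (I : Set V) :
    (thetaSolution G).submatrix (fun a : I => (a : V)) (fun a : I => (a : V)) =
      (√(Fintype.card V))⁻¹ • 1 + (2 / (√(Fintype.card V) * (√(Fintype.card V) + 1))) •
        (G.induce I)ᶜ.adjMatrix ℝ := by
  ext a b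
  simp [thetaSolution, one_apply, Subtype.ext_iff]

end ConferenceGraph

section ExactSubgraph

variable {V : Type} [Fintype V] {G : SimpleGraph V}

namespace IsConferenceGraph

theorem lovaszTheta_le [Nonempty V] (hG : IsConferenceGraph G) :
    lovaszTheta G ≤ √(Fintype.card V) := by
  have hs : 0 < √(Fintype.card V : ℝ) := Real.sqrt_pos.2 (Nat.cast_pos.2 Fintype.card_pos)
  refine Real.sSup_le ?_ hs.le
  rintro _ ⟨X, hX, htr, hadj, rfl⟩
  have h := sum_sum_mul_nonneg_of_posSemidef hG.compl.posSemidef_scaledSeidelProjection hX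
  have hentry (i j : V) : scaledSeidelProjection Gᶜ i j * X i j =
      (if i = j then (√(Fintype.card V) + 1) * X i i else 0) -
        (1 + (√(Fintype.card V))⁻¹) * X i j := by
    rcases eq_or_ne i j with rfl | hij
    · simp only [scaledSeidelProjection, Matrix.sub_apply, Matrix.add_apply, Matrix.smul_apply,
        vecMulVec_apply, one_apply_eq, seidelMatrix_apply_self, Pi.one_apply, smul_eq_mul, if_true]
      ring
    · by_cases h : G.Adj i j
      · simp [hadj i j h, hij]
      · simp only [scaledSeidelProjection, seidelMatrix_compl, Matrix.sub_apply, Matrix.add_apply,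
          Matrix.neg_apply, Matrix.smul_apply, vecMulVec_apply, one_apply_ne hij,
          seidelMatrix_apply_of_not_adj hij h, Pi.one_apply, smul_eq_mul, if_neg hij]
        ring
  have htr' : ∑ i, X i i = 1 := htr
  simp only [hentry, sum_sub_distrib, sum_ite_eq, mem_univ, if_true, ← mul_sum, htr'] at h
  have hmul : (1 + (√(Fintype.card V : ℝ))⁻¹) * √(Fintype.card V) = √(Fintype.card V) + 1 := by
    field_simp
  refine le_of_mul_le_mul_left ?_ (by positivity : 0 < 1 + (√(Fintype.card V : ℝ))⁻¹)
  linarith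

theorem theta1Feasible_thetaSolution [Nonempty V] (hG : IsConferenceGraph G) :
    Theta1Feasible G ((√(Fintype.card V))⁻¹ • 1) (thetaSolution G) := by
  refine theta1Feasible_iff.2 ⟨?_, fun i => ?_, fun i j hij => ?_⟩
  · rw [thetaSolution_sub_vecMulVec]
    exact hG.posSemidef_scaledSeidelProjection.smul (inv_nonneg.2 (by positivity))
  · simp [thetaSolution]
  · simp [thetaSolution, hij.ne, hij]

theorem thetaSolution_submatrix_mem_stab2 [Nontrivial V] (hG : IsConferenceGraph G) {I : Set V}
    (hI : (I.ncard : ℝ) ≤ (√(Fintype.card V) + 3) / 2) :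
    (thetaSolution G).submatrix (fun a : I => (a : V)) (fun a : I => (a : V)) ∈
      stab2 (G.induce I) := by
  rw [Set.ncard_eq_toFinset_card', Set.toFinset_card] at hI
  have hn : (5 : ℝ) ≤ Fintype.card V := mod_cast hG.five_le_card
  have hs : 2 < √(Fintype.card V : ℝ) := Real.lt_sqrt_of_sq_lt (by linarith)
  rw [thetaSolution_submatrix]
  generalize √(Fintype.card V : ℝ) = s at *
  have hle : (Fintype.card I : ℝ) ≤ s := by
    by_cases h3 : 3 ≤ s
    · linarith
    · have hlt : (Fintype.card I : ℝ) < (3 : ℕ) := by push_cast; linarith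
      have : Fintype.card I ≤ 2 := Nat.le_of_lt_succ (Nat.cast_lt.1 hlt)
      exact le_trans (mod_cast this) hs.le
  refine smul_one_add_smul_adjMatrix_compl_mem_stab2 (H := G.induce I) (by positivity) ?_ ?_
  · rw [div_mul_eq_mul_div, div_le_iff₀ (by positivity)]
    field_simp
    linarith
  · rwa [inv_mul_le_one₀ (by positivity)]

theorem sqrt_card_le_zJ [Nontrivial V] (hG : IsConferenceGraph G) {J : Set (Set V)}
    (hJ : ∀ I ∈ J, (I.ncard : ℝ) ≤ (√(Fintype.card V) + 3) / 2) :
    √(Fintype.card V) ≤ zJ G J := by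
  calc √(Fintype.card V) = ∑ i, ((√(Fintype.card V))⁻¹ • 1 : V → ℝ) i := by
        simp [← div_eq_mul_inv, Real.div_sqrt]
    _ ≤ zJ G J := le_zJ hG.theta1Feasible_thetaSolution
        fun I hI => hG.thetaSolution_submatrix_mem_stab2 (hJ I hI)

end IsConferenceGraph

end ExactSubgraph

section Paley

variable {F : Type} [Field F] [Fintype F]

theorem sum_quadraticChar_mul_quadraticChar (hF : ringChar F ≠ 2) {a b : F} (hab : a ≠ b) :
    ∑ c, quadraticChar F (c - a) * quadraticChar F (c - b) = -1 := by
  have hba : b - a ≠ 0 := sub_ne_zero.2 hab.symm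
  have hneg : quadraticChar F (-1) ^ 2 = 1 := quadraticChar_sq_one (neg_ne_zero.2 one_ne_zero)
  have hJacobi := jacobiSum_nontrivial_inv (quadraticChar_ne_one hF)
  rw [(quadraticChar_isQuadratic F).inv, jacobiSum] at hJacobi
  have hsubst (x : F) : quadraticChar F ((b - a) * x + a - a) *
      quadraticChar F ((b - a) * x + a - b) =
      quadraticChar F (-1) * (quadraticChar F x * quadraticChar F (1 - x)) := by
    have hxb : (b - a) * x + a - b = -1 * ((b - a) * (1 - x)) := by ring
    rw [add_sub_cancel_right, hxb, map_mul, map_mul, map_mul]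
    linear_combination quadraticChar F (-1) * quadraticChar F x * quadraticChar F (1 - x) *
      quadraticChar_sq_one hba
  rw [← Fintype.sum_equiv ((Equiv.mulLeft₀ (b - a) hba).trans (Equiv.addRight a)) _ _
    fun x => (hsubst x).symm, ← mul_sum, hJacobi]
  linear_combination -hneg

theorem sum_quadraticChar_mul_self (a : F) :
    ∑ c, quadraticChar F (c - a) * quadraticChar F (c - a) = Fintype.card F - 1 := by
  have hterm (c : F) : quadraticChar F (c - a) * quadraticChar F (c - a) =
      1 - if c = a then 1 else 0 := by
    rcases eq_or_ne c a with rfl | hca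
    · simp
    · rw [← sq, quadraticChar_sq_one (sub_ne_zero.2 hca), if_neg hca, sub_zero]
  simp only [hterm, sum_sub_distrib, sum_ite_eq', mem_univ, if_true, sum_const, card_univ,
    nsmul_eq_mul, mul_one]

theorem ringChar_ne_two_of_card (hF : Fintype.card F % 4 = 1) : ringChar F ≠ 2 := by
  rw [Ne, FiniteField.even_card_iff_char_two]
  omega

theorem quadraticChar_neg (hF : Fintype.card F % 4 = 1) (a : F) :
    quadraticChar F (-a) = quadraticChar F a := by
  have : quadraticChar F (-1) = 1 := by
    rw [quadraticChar_one_iff_isSquare (neg_ne_zero.2 one_ne_zero),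
      FiniteField.isSquare_neg_one_iff]
    omega
  rw [neg_eq_neg_one_mul, map_mul, this, one_mul]

theorem quadraticChar_eq_one_iff_exists_sq {a : F} :
    quadraticChar F a = 1 ↔ ∃ z : F, z ≠ 0 ∧ a = z ^ 2 := by
  constructor
  · intro h
    have ha : a ≠ 0 := fun h0 => by simp [h0] at h
    obtain ⟨z, rfl⟩ := isSquare_iff_exists_sq a |>.1 ((quadraticChar_one_iff_isSquare ha).1 h)
    exact ⟨z, pow_ne_zero_iff two_ne_zero |>.1 ha, rfl⟩
  · rintro ⟨z, hz, rfl⟩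
    exact quadraticChar_sq_one' hz

theorem paley_adj_iff_s12 (hF : Fintype.card F % 4 = 1) {a b : F} :
    (Paley F).Adj a b ↔ quadraticChar F (a - b) = 1 := by
  rw [Paley, SimpleGraph.fromRel_adj, ← quadraticChar_eq_one_iff_exists_sq,
    ← quadraticChar_eq_one_iff_exists_sq, ← neg_sub a b, quadraticChar_neg hF, or_self,
    and_iff_right_iff_imp]
  rintro h rfl
  simp at h

theorem seidelMatrix_paley (hF : Fintype.card F % 4 = 1) (a b : F) :
    seidelMatrix (Paley F) a b = -quadraticChar F (a - b) := by
  rcases eq_or_ne a b with rfl | hab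
  · simp
  · by_cases h : (Paley F).Adj a b
    · rw [seidelMatrix_apply_of_adj h, (paley_adj_iff_s12 hF).1 h, Int.cast_one]
    · have hχ : quadraticChar F (a - b) = -1 :=
        (quadraticChar_dichotomy (sub_ne_zero.2 hab)).resolve_left (mt (paley_adj_iff_s12 hF).2 h)
      rw [seidelMatrix_apply_of_not_adj hab h, hχ]
      simp

theorem isConferenceGraph_paley (hF : Fintype.card F % 4 = 1) : IsConferenceGraph (Paley F) := by
  ext a b
  have hmul : (seidelMatrix (Paley F) * seidelMatrix (Paley F)) a b =
      (∑ c, quadraticChar F (c - a) * quadraticChar F (c - b) : ℤ) := by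
    simp only [mul_apply, (isSymm_seidelMatrix (Paley F)).apply _ a, seidelMatrix_paley hF,
      neg_mul_neg, Int.cast_sum, Int.cast_mul]
  rw [hmul]
  rcases eq_or_ne a b with rfl | hab
  · rw [sum_quadraticChar_mul_self]
    simp
  · rw [sum_quadraticChar_mul_quadraticChar (ringChar_ne_two_of_card hF) hab]
    simp [hab]

end Paley

theorem stmt12_general {V : Type} [Fintype V] [Nontrivial V] {G : SimpleGraph V}
    (hG : IsConferenceGraph G) {J : Set (Set V)}
    (hJ : ∀ I ∈ J, (I.ncard : ℝ) ≤ (√(Fintype.card V) + 3) / 2) :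
    zJ G J = lovaszTheta G ∧ lovaszTheta G = √(Fintype.card V) := by
  have hlower := hG.sqrt_card_le_zJ hJ
  have hmid := zJ_le_lovaszTheta G J
  have hupper := hG.lovaszTheta_le
  exact ⟨hmid.antisymm (hupper.trans hlower), hupper.antisymm (hlower.trans hmid)⟩

theorem stmt12 (q : ℕ) (F : Type) [Field F] [Fintype F]
    (hcard : Fintype.card F = q) (hq : q % 4 = 1)
    (k : ℕ) (hk : (k : ℤ) ≤ ⌊(Real.sqrt q + 3) / 2⌋) :
    zk (Paley F) k = lovaszTheta (Paley F) ∧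
      lovaszTheta (Paley F) = Real.sqrt q := by
  subst hcard
  exact stmt12_general (isConferenceGraph_paley hq) fun I hI =>
    le_trans (mod_cast hI.trans_le (min_le_left _ _)) (Int.le_floor.1 hk)
end
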